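/- Let B be a free product of a family of nontrivial cyclic groups (each isomorphic to ℤ or to ℤ/kℤ for some k ≥ 2), and assume B contains no abelian subgroup of finite index. Then there exists N ∈ ℕ such that for every integer n ≥ N there is a sequence (a_ℓ)_{ℓ∈ℕ} of elements of B such that for all ℓ₁ ≠ ℓ₂ one has a_{ℓ₁}⁻¹a_{ℓ₂} ∉ {xⁿyⁿ : x, y ∈ B}. -/

import Mathlib

/-!
The obstruction to being a product of two `n`-th powers comes from Brooks-type counting
quasimorphisms on the free product `B`.

For a pattern `w` (a reduced word) let `qm w x` be the number of occurrences of `w` in the reduced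
word of `x` minus the number of occurrences of `w⁻¹`. If `w` is unbordered, occurrences of `w` do
not overlap, so at most one of them straddles any given junction, and `qm w` is a quasimorphism
with defect at most `9`, whatever `w` is (`qm_mul`). On the powers of a cyclically reduced word the
count grows eventually by a constant *integer* per period, and passing to a conjugate changes the
values by a bounded amount only. Hence `qm w (x ^ n)` lies within `19` of `n ℤ` (`qm_pow`), and
`qm w (x ^ n * y ^ n)` within `47` of `n ℤ` (`qm_pow_mul_pow`).

Let `W₀, W₁, …` be cyclically reduced unbordered patterns of rapidly increasing length such that
`Wⱼ⁻¹` never occurs in a power of `Wⱼ`, and put `aⱼ = Wⱼ ^ 57`. Then `qm Wⱼ aⱼ = 57`, while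
`qm Wⱼ aᵢ = 0` for `i < j` because `aᵢ` is shorter than `Wⱼ`. So `qm Wⱼ` takes values within `9`
of `57` and `-57` at `aᵢ⁻¹ aⱼ` and `aⱼ⁻¹ aᵢ`, and these are not within `47` of `n ℤ` once `n ≥ 114`
(`exists_sequence_of_patterns`).

Such patterns exist as soon as there are two factors, one of which contains `t` with `t² ≠ 1`
(take `(s t)ᵏ s t⁻¹`), or three factors (take `(a b)ᵏ c`). In the remaining cases `B` is trivial,
cyclic or infinite dihedral, hence virtually abelian.
-/

namespace CyclicFreeProduct

/-! ### Counting occurrences of a pattern in a list -/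

section Lists

variable {α : Type*}

open Classical in
/-- The number of positions of `L` at which the (nonempty) pattern `w` starts. -/
noncomputable def occ (w : List α) : List α → ℕ
  | [] => 0
  | a :: L => (if w <+: a :: L then 1 else 0) + occ w L

/-- The concatenation of `n` copies of `L`. -/
def rep (L : List α) : ℕ → List α
  | 0 => []
  | n + 1 => L ++ rep L n

/-- A list none of whose nonempty proper prefixes is also a suffix; two distinct occurrences of
such a pattern never overlap. -/
def Unbordered (w : List α) : Prop :=
  ∀ p : List α, p ≠ [] → p <+: w → p <:+ w → p = w

theorem rep_add (L : List α) (a b : ℕ) : rep L (a + b) = rep L a ++ rep L b := by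
  induction a with
  | zero => simp [rep]
  | succ a ih => rw [Nat.succ_add, rep, rep, ih, List.append_assoc]

theorem length_rep (L : List α) (n : ℕ) : (rep L n).length = n * L.length := by
  induction n with
  | zero => simp [rep]
  | succ n ih => simp [rep, ih]; ring

theorem occ_append_ge (w A B : List α) : occ w A + occ w B ≤ occ w (A ++ B) := by
  induction A with
  | nil => simp [occ]
  | cons a A ih =>
    have : w <+: a :: A → w <+: a :: (A ++ B) := fun h => h.trans ⟨B, by simp⟩
    simp only [occ, List.cons_append]
    split_ifs <;> first | omega | tauto

theorem occ_eq_zero_of_length_lt (w L : List α) (h : L.length < w.length) : occ w L = 0 := by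
  induction L with
  | nil => rfl
  | cons a L ih =>
    have h1 : ¬ w <+: a :: L := fun h' => by have := h'.length_le; omega
    simp only [List.length_cons] at h
    simp [occ, h1, ih (by omega)]

theorem infix_of_occ_pos (w L : List α) (h : 0 < occ w L) : w <:+: L := by
  induction L with
  | nil => simp [occ] at h
  | cons a L ih =>
    by_cases h1 : w <+: a :: L
    · exact h1.isInfix
    · simp only [occ, h1, if_false, zero_add] at h
      exact (ih h).trans (List.suffix_cons a L).isInfix

theorem occ_proper_suffix_append (w : List α) (hw : Unbordered w) (S R : List α)
    (hS : S <:+ w) (hne : S ≠ w) : occ w (S ++ R) = occ w R := by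
  induction S with
  | nil => rfl
  | cons a S ih =>
    have h1 : ¬ w <+: a :: (S ++ R) := by
      intro h
      have h2 : a :: S <+: w :=
        List.prefix_of_prefix_length_le (l₃ := a :: (S ++ R)) ⟨R, by simp⟩ h hS.length_le
      exact hne (hw _ (by simp) h2 hS)
    have h3 : S <:+ w := (List.suffix_cons a S).trans hS
    have h4 : S ≠ w := by
      rintro rfl
      have := hS.length_le
      simp at this
    simp [occ, h1, ih h3 h4]

theorem occ_self_append (w : List α) (hw : Unbordered w) (h0 : w ≠ []) (R : List α) :
    occ w (w ++ R) = 1 + occ w R := by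
  obtain ⟨a, S, rfl⟩ := List.exists_cons_of_ne_nil h0
  have h1 : a :: S <+: a :: (S ++ R) := ⟨R, by simp⟩
  rw [List.cons_append, occ, if_pos h1,
    occ_proper_suffix_append _ hw S R (List.suffix_cons a S) (by simp)]

theorem occ_rep_self (w : List α) (hw : Unbordered w) (h0 : w ≠ []) (n : ℕ) :
    occ w (rep w n) = n := by
  induction n with
  | zero => rfl
  | succ n ih => rw [rep, occ_self_append w hw h0, ih]; omega

/-- At most one occurrence of an unbordered pattern straddles a given junction. -/
theorem occ_append_le (w : List α) (hw : Unbordered w) (A B : List α) :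
    occ w (A ++ B) ≤ occ w A + occ w B + 1 := by
  induction A with
  | nil => simp [occ]
  | cons a A ih =>
    by_cases h : w <+: a :: (A ++ B)
    · rcases le_or_gt w.length (a :: A).length with hl | hl
      · have h1 : w <+: a :: A :=
          List.prefix_of_prefix_length_le (l₃ := a :: (A ++ B)) h ⟨B, by simp⟩ hl
        simp only [occ, List.cons_append, h, h1, if_true]
        omega
      · have h1 : a :: A <+: w :=
          List.prefix_of_prefix_length_le (l₃ := a :: (A ++ B)) ⟨B, by simp⟩ h hl.le
        obtain ⟨C, rfl⟩ := h1
        obtain ⟨D, hD⟩ := h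
        have hB : B = C ++ D := by simpa using hD.symm
        have h2 := occ_proper_suffix_append _ hw (A ++ C) D ⟨[a], by simp⟩ (by
          intro h'
          have := congrArg List.length h'
          simp at this)
        have h3 := occ_append_ge (a :: A ++ C) C D
        subst hB
        rw [List.append_assoc] at h2
        simp only [occ, List.cons_append] at h2 h3 ⊢
        split_ifs <;> omega
    · simp only [occ, List.cons_append, h, if_false]
      omega

open Classical in
theorem occ_concat (w : List α) (h0 : w ≠ []) (L : List α) (a : α) :
    occ w (L ++ [a]) = occ w L + if w <:+ L ++ [a] then 1 else 0 := by
  induction L with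
  | nil =>
    have : w <+: [a] ↔ w <:+ [a] := by
      rw [List.prefix_cons_iff, List.suffix_cons_iff]; simp [h0]
    by_cases h : w <:+ [a] <;> simp [occ, this, h]
  | cons b L ih =>
    have h1 : w <+: b :: (L ++ [a]) ↔ w = b :: (L ++ [a]) ∨ w <+: b :: L := by
      have := List.prefix_concat_iff (l₁ := w) (l₂ := b :: L) (a := a)
      simpa using this
    have h2 : w <:+ b :: (L ++ [a]) ↔ w = b :: (L ++ [a]) ∨ w <:+ L ++ [a] :=
      List.suffix_cons_iff
    have h3 : w = b :: (L ++ [a]) → ¬ w <+: b :: L := by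
      rintro rfl h; have := h.length_le; simp at this
    have h4 : w = b :: (L ++ [a]) → ¬ w <:+ L ++ [a] := by
      rintro rfl h; have := h.length_le; simp at this
    rw [List.cons_append, occ, occ, ih]
    by_cases h5 : w = b :: (L ++ [a])
    · rw [if_pos (h1.2 (.inl h5)), if_neg (h4 h5), if_neg (h3 h5), if_pos (h2.2 (.inl h5))]
      omega
    · simp only [h5, false_or] at h1 h2
      by_cases h6 : w <+: b :: L <;> by_cases h7 : w <:+ L ++ [a] <;>
        simp only [h1, h2, h6, h7, if_true, if_false] <;> omega

theorem occ_reverse (w : List α) (h0 : w ≠ []) (L : List α) :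
    occ w.reverse L.reverse = occ w L := by
  classical
  induction L with
  | nil => rfl
  | cons a L ih =>
    rw [List.reverse_cons, occ_concat _ (by simpa using h0), ih, occ, add_comm]
    have : w.reverse <:+ L.reverse ++ [a] ↔ w <+: a :: L := by
      rw [← List.reverse_cons, List.reverse_suffix]
    simp [this]

theorem occ_map {β : Type*} (f : α → β) (hf : Function.Injective f) (w L : List α) :
    occ (w.map f) (L.map f) = occ w L := by
  induction L with
  | nil => rfl
  | cons a L ih =>
    have : w.map f <+: f a :: L.map f ↔ w <+: a :: L := by
      rw [← List.map_cons, List.prefix_map_iff_of_injective hf]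
    by_cases h : w <+: a :: L <;> simp [occ, ih, this, h]

/-- The number of occurrences of `w` starting inside `L` in `L ++ R` depends only on the first
`w.length` letters of `R`. -/
theorem occ_append_congr (w L R R' : List α) (h : R.take w.length = R'.take w.length) :
    occ w (L ++ R) + occ w R' = occ w (L ++ R') + occ w R := by
  induction L with
  | nil => simp [add_comm]
  | cons a L ih =>
    have h1 : w <+: a :: (L ++ R) ↔ w <+: a :: (L ++ R') := by
      rw [List.prefix_iff_eq_take, List.prefix_iff_eq_take, ← List.cons_append, ← List.cons_append,
        List.take_append, List.take_append]
      have : ∀ k, R.take (w.length - k) = R'.take (w.length - k) := fun k => by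
        have := congrArg (List.take (w.length - k)) h
        simpa [List.take_take] using this
      rw [this]
    by_cases h2 : w <+: a :: (L ++ R') <;>
      simp only [List.cons_append, occ, h1, h2, if_true, if_false] <;> omega

theorem occ_rep_eventually (w L : List α) (hL : L ≠ []) :
    ∃ z : ℤ, ∀ n, w.length ≤ n →
      (occ w (rep L (n + 1)) : ℤ) - occ w (rep L n) = z := by
  refine ⟨(occ w (rep L (w.length + 1)) : ℤ) - occ w (rep L w.length), fun n hn => ?_⟩
  obtain ⟨k, rfl⟩ := Nat.exists_eq_add_of_le hn
  have h := occ_append_congr w L (rep L (w.length + k)) (rep L w.length) (by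
    rw [rep_add, List.take_append_of_le_length]
    rw [length_rep]
    exact Nat.le_mul_of_pos_right _ (List.length_pos_iff.2 hL))
  simp only [rep]
  omega

theorem Unbordered.reverse {w : List α} (hw : Unbordered w) : Unbordered w.reverse := by
  intro p h0 h1 h2
  have := hw p.reverse (by simpa using h0) (by rwa [← List.reverse_suffix, List.reverse_reverse])
    (by rwa [← List.reverse_prefix, List.reverse_reverse])
  rw [← this, List.reverse_reverse]

theorem Unbordered.map {β : Type*} {w : List α} (hw : Unbordered w) (f : α → β)
    (hf : Function.Injective f) : Unbordered (w.map f) := by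
  intro p h0 h1 h2
  obtain ⟨q, hq, rfl⟩ := List.prefix_map_iff.1 h1
  obtain ⟨q', hq', h'⟩ := List.suffix_map_iff.1 h2
  have : q = q' := List.map_injective_iff.2 hf h'
  subst this
  rw [hw q (by rintro rfl; exact h0 rfl) hq hq']

/-- A list whose last letter occurs only once is unbordered. -/
theorem unbordered_concat (L : List α) (a : α) (h : a ∉ L) : Unbordered (L ++ [a]) := by
  intro p h0 h1 h2
  rcases List.prefix_concat_iff.1 h1 with h3 | h3
  · exact h3
  · rcases List.suffix_concat_iff.1 h2 with h4 | ⟨t, rfl, -⟩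
    · exact absurd h4 h0
    · exact absurd (h3.subset (by simp)) h

end Lists

end CyclicFreeProduct

namespace CyclicFreeProduct

open Monoid

/-! ### Reduced words in a free product -/

section Words

variable {ι : Type*} {G : ι → Type*} [∀ i, Group (G i)]

/-- Reduced words: no trivial letter, and adjacent letters come from different factors. -/
def Red (L : List (Σ i, G i)) : Prop :=
  (∀ l ∈ L, l.2 ≠ 1) ∧ L.IsChain (fun l l' => l.1 ≠ l'.1)

/-- The element of the free product spelled by a list of letters. -/
def lprod (L : List (Σ i, G i)) : CoprodI G := (L.map fun l => CoprodI.of l.2).prod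

/-- The inverse of a letter. -/
def letterInv (l : Σ i, G i) : Σ i, G i := ⟨l.1, l.2⁻¹⟩

/-- The formal inverse of a list of letters. -/
def linv (L : List (Σ i, G i)) : List (Σ i, G i) := (L.map letterInv).reverse

open Classical in
/-- The reduced word of an element of the free product. -/
noncomputable def nf (x : CoprodI G) : List (Σ i, G i) := (CoprodI.Word.equiv x).toList

theorem red_nf (x : CoprodI G) : Red (nf x) := by
  classical exact ⟨(CoprodI.Word.equiv x).ne_one, (CoprodI.Word.equiv x).chain_ne⟩

theorem lprod_nf (x : CoprodI G) : lprod (nf x) = x := by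
  classical exact CoprodI.Word.equiv.symm_apply_apply x

theorem nf_lprod {L : List (Σ i, G i)} (h : Red L) : nf (lprod L) = L := by
  classical
  exact congrArg CoprodI.Word.toList
    (CoprodI.Word.equiv.apply_symm_apply (⟨L, h.1, h.2⟩ : CoprodI.Word G))

theorem lprod_append (A B : List (Σ i, G i)) : lprod (A ++ B) = lprod A * lprod B := by
  simp [lprod]

theorem lprod_rep (L : List (Σ i, G i)) (n : ℕ) : lprod (rep L n) = lprod L ^ n := by
  induction n with
  | zero => simp [rep, lprod]
  | succ n ih => rw [rep, lprod_append, ih, pow_succ']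

theorem letterInv_injective : Function.Injective (letterInv (G := G)) := by
  rintro ⟨i, a⟩ ⟨j, b⟩ h
  simp only [letterInv, Sigma.mk.injEq] at h
  obtain ⟨rfl, h⟩ := h
  simpa using h

theorem letterInv_letterInv (l : Σ i, G i) : letterInv (letterInv l) = l := by
  obtain ⟨i, g⟩ := l
  exact congrArg (Sigma.mk i) (inv_inv g)

theorem linv_linv (L : List (Σ i, G i)) : linv (linv L) = L := by
  simp [linv, Function.comp_def, letterInv_letterInv]

theorem linv_append (A B : List (Σ i, G i)) : linv (A ++ B) = linv B ++ linv A := by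
  simp [linv]

theorem lprod_linv (L : List (Σ i, G i)) : lprod (linv L) = (lprod L)⁻¹ := by
  induction L with
  | nil => simp [linv, lprod]
  | cons a L ih =>
    have : a :: L = [a] ++ L := rfl
    rw [this, linv_append, lprod_append, lprod_append, ih, mul_inv_rev]
    simp [linv, lprod, letterInv]

theorem Red.linv {L : List (Σ i, G i)} (h : Red L) : Red (linv L) := by
  refine ⟨?_, ?_⟩
  · intro l hl
    simp only [CyclicFreeProduct.linv, List.mem_reverse, List.mem_map] at hl
    obtain ⟨m, hm, rfl⟩ := hl
    exact inv_ne_one.2 (h.1 m hm)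
  · rw [CyclicFreeProduct.linv, List.isChain_reverse, List.isChain_map]
    exact h.2.imp fun a b hab => hab.symm

theorem Red.left {A B : List (Σ i, G i)} (h : Red (A ++ B)) : Red A :=
  ⟨fun l hl => h.1 l (by simp [hl]), h.2.left_of_append⟩

theorem Red.right {A B : List (Σ i, G i)} (h : Red (A ++ B)) : Red B :=
  ⟨fun l hl => h.1 l (by simp [hl]), h.2.right_of_append⟩

theorem red_glue {A B : List (Σ i, G i)} {a b : Σ i, G i} (hA : Red (A ++ [a]))
    (hB : Red (b :: B)) (hab : a.1 ≠ b.1) : Red (A ++ [a] ++ b :: B) := by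
  refine ⟨fun l hl => ?_, ?_⟩
  · rcases List.mem_append.1 hl with h | h
    · exact hA.1 l h
    · exact hB.1 l h
  · rw [List.append_assoc, List.singleton_append, List.isChain_append_cons_cons]
    exact ⟨hA.2, hab, hB.2⟩

/-- Merging the last letter of a reduced word with the first letter of another one, both from the
factor `i`, into any nontrivial letter of that factor gives a reduced word. -/
theorem red_merge {A B : List (Σ i, G i)} {i : ι} {g g' k : G i} (hA : Red (A ++ [⟨i, g⟩]))
    (hB : Red (⟨i, g'⟩ :: B)) (hk : k ≠ 1) : Red (A ++ [⟨i, k⟩] ++ B) := by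
  refine ⟨fun l hl => ?_, ?_⟩
  · simp only [List.append_assoc, List.mem_append, List.mem_singleton] at hl
    rcases hl with h | rfl | h
    · exact hA.1 l (by simp [h])
    · exact hk
    · exact hB.1 l (by simp [h])
  · rw [List.append_assoc, List.singleton_append]
    rw [List.isChain_append]
    have h1 := List.isChain_append.1 hA.2
    refine ⟨h1.1, ?_, ?_⟩
    · have h2 := List.isChain_cons.1 hB.2
      exact List.isChain_cons.2 ⟨fun y hy => h2.1 y hy, h2.2⟩
    · intro x hx y hy
      have h3 := h1.2.2 x hx ⟨i, g⟩ (by simp)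
      simp at hy
      subst hy
      exact h3

/-- In a product of two reduced words, a suffix of the first cancels against a prefix of the
second, after which at most one pair of letters is merged. -/
theorem exists_cancel (A B : List (Σ i, G i)) (hA : Red A) (hB : Red B) :
    ∃ P M₁ C M₂ Q M : List (Σ i, G i), A = P ++ M₁ ++ C ∧ B = linv C ++ M₂ ++ Q ∧
      M₁.length ≤ 1 ∧ M₂.length ≤ 1 ∧ M.length ≤ 1 ∧ Red (P ++ M ++ Q) ∧
      lprod (P ++ M ++ Q) = lprod A * lprod B := by
  induction A using List.reverseRecOn generalizing B with
  | nil => exact ⟨[], [], [], [], B, [], by simp [linv, hB, lprod]⟩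
  | append_singleton A a ih =>
    rcases B with _ | ⟨b, B⟩
    · exact ⟨A ++ [a], [], [], [], [], [], by simp [linv, hA, lprod]⟩
    · by_cases hab : a.1 = b.1
      · obtain ⟨i, g⟩ := a
        obtain ⟨j, g'⟩ := b
        obtain rfl : i = j := hab
        by_cases hg : g * g' = 1
        · have hg' : g' = g⁻¹ := (inv_eq_of_mul_eq_one_right hg).symm
          subst hg'
          obtain ⟨P, M₁, C, M₂, Q, M, h1, h2, h3, h4, h5, h6, h7⟩ := ih B hA.left
            (Red.right (A := [⟨i, g⁻¹⟩]) hB)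
          refine ⟨P, M₁, C ++ [⟨i, g⟩], M₂, Q, M, ?_, ?_, h3, h4, h5, h6, ?_⟩
          · rw [h1]; simp
          · rw [h2]; simp [linv, letterInv]
          · rw [h7]; simp [lprod]
        · refine ⟨A, [⟨i, g⟩], [], [⟨i, g'⟩], B, [⟨i, g * g'⟩], by simp, by simp [linv], by simp,
            by simp, by simp, red_merge hA hB hg, ?_⟩
          simp [lprod, mul_assoc]
      · exact ⟨A ++ [a], [], [], [], b :: B, [], by simp, by simp [linv], by simp, by simp,
          by simp, by simpa using red_glue hA hB hab, by simp [lprod, mul_assoc]⟩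

theorem red_rep {a b : Σ i, G i} {L : List (Σ i, G i)} (h : Red (a :: L ++ [b]))
    (hab : a.1 ≠ b.1) (n : ℕ) : Red (rep (a :: L ++ [b]) n) := by
  induction n with
  | zero => simp [rep, Red]
  | succ n ih =>
    rcases n with _ | n
    · simpa [rep] using h
    · exact red_glue (A := a :: L) h ih hab.symm

/-- Every element is conjugate to one whose reduced word has length at most one or has its first
and last letters in different factors. -/
theorem exists_conj_cyclically_reduced (x : CoprodI G) :
    ∃ (u : CoprodI G) (W : List (Σ i, G i)), Red W ∧ x = u * lprod W * u⁻¹ ∧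
      (W.length ≤ 1 ∨ ∃ a L b, W = a :: L ++ [b] ∧ a.1 ≠ b.1) := by
  suffices H : ∀ (n : ℕ) (W : List (Σ i, G i)), W.length = n → Red W →
      ∃ (u : CoprodI G) (V : List (Σ i, G i)), Red V ∧ lprod W = u * lprod V * u⁻¹ ∧
      (V.length ≤ 1 ∨ ∃ a L b, V = a :: L ++ [b] ∧ a.1 ≠ b.1) by
    simpa [lprod_nf] using H _ (nf x) rfl (red_nf x)
  intro n
  induction n using Nat.strong_induction_on with
  | _ n ih =>
    intro W hn hW
    by_cases h1 : W.length ≤ 1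
    · exact ⟨1, W, hW, by simp, .inl h1⟩
    rcases W with _ | ⟨a, W⟩
    · simp at h1
    rcases List.eq_nil_or_concat' W with rfl | ⟨L, b, rfl⟩
    · simp at h1
    by_cases hab : a.1 = b.1
    · obtain ⟨i, g⟩ := a
      obtain ⟨j, g'⟩ := b
      obtain rfl : i = j := hab
      have hL : Red (L ++ [⟨i, g'⟩]) := Red.right (A := [⟨i, g⟩]) hW
      by_cases hg : g' * g = 1
      · obtain ⟨u, V, h2, h3, h4⟩ := ih L.length (by simp at hn; omega) L rfl hL.left
        refine ⟨CoprodI.of g * u, V, h2, ?_, h4⟩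
        have h5 : g' = g⁻¹ := eq_inv_of_mul_eq_one_left hg
        have h6 : lprod (⟨i, g⟩ :: (L ++ [⟨i, g'⟩]))
            = CoprodI.of g * lprod L * (CoprodI.of g)⁻¹ := by
          simp [lprod, h5, mul_assoc]
        rw [h6, h3]
        group
      · obtain ⟨u, V, h2, h3, h4⟩ := ih (L.length + 1) (by simp at hn; omega)
          (L ++ [⟨i, g' * g⟩]) (by simp) (by
            have h2 : Red [(⟨i, g'⟩ : Σ i, G i)] := hL.right
            simpa using red_merge hL h2 hg)
        refine ⟨CoprodI.of g * u, V, h2, ?_, h4⟩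
        have h6 : lprod (⟨i, g⟩ :: (L ++ [⟨i, g'⟩]))
            = CoprodI.of g * lprod (L ++ [⟨i, g' * g⟩]) * (CoprodI.of g)⁻¹ := by
          simp [lprod, mul_assoc]
        rw [h6, h3]
        group
    · exact ⟨1, _, hW, by simp, .inr ⟨a, L, b, rfl, hab⟩⟩

/-! ### Counting quasimorphisms -/

/-- The signed count: occurrences of `w` minus occurrences of its formal inverse. -/
noncomputable def hcount (w L : List (Σ i, G i)) : ℤ := (occ w L : ℤ) - occ (linv w) L

theorem Unbordered.linv {w : List (Σ i, G i)} (hw : Unbordered w) : Unbordered (linv w) :=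
  (hw.map _ letterInv_injective).reverse

theorem hcount_append {w : List (Σ i, G i)} (hw : Unbordered w) (A B : List (Σ i, G i)) :
    |hcount w (A ++ B) - hcount w A - hcount w B| ≤ 1 := by
  have h1 := occ_append_ge w A B
  have h2 := occ_append_le w hw A B
  have h3 := occ_append_ge (linv w) A B
  have h4 := occ_append_le (linv w) hw.linv A B
  rw [abs_le]
  simp only [hcount]
  omega

theorem hcount_short (w M : List (Σ i, G i)) (hM : M.length ≤ 1) : |hcount w M| ≤ 1 := by
  have h : ∀ v : List (Σ i, G i), occ v M ≤ 1 := by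
    intro v
    rcases M with _ | ⟨a, _ | ⟨b, M⟩⟩
    · simp [occ]
    · simp only [occ]; split_ifs <;> simp
    · simp at hM
  have h1 := h w
  have h2 := h (linv w)
  rw [abs_le]
  simp only [hcount]
  omega

theorem occ_linv {w : List (Σ i, G i)} (h0 : w ≠ []) (L : List (Σ i, G i)) :
    occ (linv w) (linv L) = occ w L := by
  rw [linv, linv, occ_reverse _ (by simpa using h0), occ_map _ letterInv_injective]

theorem hcount_linv {w : List (Σ i, G i)} (h0 : w ≠ []) (L : List (Σ i, G i)) :
    hcount w (linv L) = - hcount w L := by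
  have h1 := occ_linv h0 L
  have h2 := occ_linv (w := linv w) (by simpa [linv] using h0) L
  rw [linv_linv] at h2
  simp only [hcount]
  omega

/-- The counting quasimorphism of `w` on the free product. -/
noncomputable def qm (w : List (Σ i, G i)) (x : CoprodI G) : ℤ := hcount w (nf x)

theorem qm_inv {w : List (Σ i, G i)} (h0 : w ≠ []) (x : CoprodI G) :
    qm w x⁻¹ = - qm w x := by
  have : nf x⁻¹ = linv (nf x) := by
    rw [← nf_lprod (red_nf x).linv, lprod_linv, lprod_nf]
  rw [qm, this, hcount_linv h0, qm]

/-- The defect is bounded independently of the pattern. -/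
theorem qm_mul {w : List (Σ i, G i)} (hw : Unbordered w) (h0 : w ≠ []) (x y : CoprodI G) :
    |qm w (x * y) - qm w x - qm w y| ≤ 9 := by
  obtain ⟨P, M₁, C, M₂, Q, M, h1, h2, h3, h4, h5, h6, h7⟩ :=
    exists_cancel (nf x) (nf y) (red_nf x) (red_nf y)
  rw [lprod_nf, lprod_nf] at h7
  rw [qm, qm, qm, ← h7, nf_lprod h6, h1, h2]
  have a1 := hcount_append hw (P ++ M) Q
  have a2 := hcount_append hw P M
  have a3 := hcount_append hw (P ++ M₁) C
  have a4 := hcount_append hw P M₁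
  have a5 := hcount_append hw (linv C ++ M₂) Q
  have a6 := hcount_append hw (linv C) M₂
  have a7 := hcount_linv h0 C
  have b1 := hcount_short w M h5
  have b2 := hcount_short w M₁ h3
  have b3 := hcount_short w M₂ h4
  rw [abs_le] at *
  omega

/-- On the powers of a fixed element the quasimorphism stays uniformly close to an integral
linear function. -/
theorem qm_pow {w : List (Σ i, G i)} (hw : Unbordered w) (h0 : w ≠ []) (x : CoprodI G) :
    ∃ z : ℤ, ∀ n : ℕ, |qm w (x ^ n) - n * z| ≤ 19 := by
  obtain ⟨u, W, hW, rfl, h⟩ := exists_conj_cyclically_reduced x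
  suffices H : ∃ z : ℤ, ∀ n : ℕ, |qm w (lprod W ^ n) - n * z| ≤ 1 by
    obtain ⟨z, hz⟩ := H
    refine ⟨z, fun n => ?_⟩
    rw [conj_pow]
    have a1 := hz n
    have a2 := qm_mul hw h0 (u * lprod W ^ n) u⁻¹
    have a3 := qm_mul hw h0 u (lprod W ^ n)
    have a4 := qm_inv h0 u
    rw [abs_le] at *
    omega
  rcases h with h | ⟨a, L, b, rfl, hab⟩
  · refine ⟨0, fun n => ?_⟩
    rw [mul_zero, sub_zero]
    apply hcount_short
    -- powers of an element of a factor stay in the factor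
    rcases W with _ | ⟨⟨i, g⟩, _ | ⟨b, W⟩⟩
    · have : lprod ([] : List (Σ i, G i)) ^ n = lprod [] := by simp [lprod]
      rw [this, nf_lprod hW]; simp
    · by_cases hg : g ^ n = 1
      · have : lprod [(⟨i, g⟩ : Σ i, G i)] ^ n = lprod [] := by
          simp [lprod, ← map_pow, hg]
        rw [this, nf_lprod (by simp [Red])]; simp
      · have : lprod [(⟨i, g⟩ : Σ i, G i)] ^ n = lprod [⟨i, g ^ n⟩] := by
          simp [lprod]
        rw [this, nf_lprod (by simpa [Red] using hg)]; simp
    · simp at h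
  · obtain ⟨z₁, hz₁⟩ := occ_rep_eventually w (a :: L ++ [b]) (by simp)
    obtain ⟨z₂, hz₂⟩ := occ_rep_eventually (linv w) (a :: L ++ [b]) (by simp)
    set f : ℕ → ℤ := fun n => hcount w (rep (a :: L ++ [b]) n) with hf
    have hq : ∀ n, qm w (lprod (a :: L ++ [b]) ^ n) = f n := fun n => by
      rw [qm, ← lprod_rep, nf_lprod (red_rep hW hab n)]
    set m := max w.length (linv w).length with hm
    have hstep : ∀ n, m ≤ n → f (n + 1) = f n + (z₁ - z₂) := fun n hn => by
      have h1 := hz₁ n (by omega)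
      have h2 := hz₂ n (by omega)
      simp only [hf, hcount]
      omega
    have hlin : ∀ n, f (m + n) = f m + n * (z₁ - z₂) := fun n => by
      induction n with
      | zero => simp
      | succ n ih => rw [← add_assoc, hstep _ (by omega), ih]; push_cast; ring
    refine ⟨z₁ - z₂, fun n => ?_⟩
    -- beyond `m` the function is exactly linear, so additivity up to one at `m + n` is enough
    have h1 := hcount_append hw (rep (a :: L ++ [b]) m) (rep (a :: L ++ [b]) n)
    rw [← rep_add] at h1
    have h2 : |f (m + n) - f m - f n| ≤ 1 := h1
    rw [hlin] at h2
    rw [hq, abs_sub_comm]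
    convert h2 using 2
    ring

/-- A product of two `n`-th powers has value within a constant of `n ℤ`. -/
theorem qm_pow_mul_pow {w : List (Σ i, G i)} (hw : Unbordered w) (h0 : w ≠ [])
    (x y : CoprodI G) (n : ℕ) : ∃ z : ℤ, |qm w (x ^ n * y ^ n) - n * z| ≤ 47 := by
  obtain ⟨z₁, h₁⟩ := qm_pow hw h0 x
  obtain ⟨z₂, h₂⟩ := qm_pow hw h0 y
  refine ⟨z₁ + z₂, ?_⟩
  have a1 := h₁ n
  have a2 := h₂ n
  have a3 := qm_mul hw h0 (x ^ n) (y ^ n)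
  rw [mul_add]
  rw [abs_le] at *
  omega

end Words

end CyclicFreeProduct

namespace CyclicFreeProduct

open Monoid

/-! ### Separating sequences from long asymmetric patterns -/

section Patterns

variable {ι : Type*} {G : ι → Type*} [∀ i, Group (G i)]

/-- Long unbordered patterns, with reduced powers in which their inverses do not occur, produce the
required sequence, namely `57`-th powers of patterns of rapidly growing length. -/
theorem exists_sequence_of_patterns (W : ℕ → List (Σ i, G i))
    (hlen : ∀ k, k < (W k).length) (hlen' : ∀ k, (W k).length ≤ 2 * k + 6)
    (hred : ∀ k M, Red (rep (W k) M)) (hub : ∀ k, Unbordered (W k))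
    (hinv : ∀ k M, ¬ linv (W k) <:+: rep (W k) M) :
    ∃ N : ℕ, ∀ n : ℕ, N ≤ n → ∃ a : ℕ → CoprodI G, ∀ ℓ₁ ℓ₂ : ℕ, ℓ₁ ≠ ℓ₂ →
      ¬ ∃ x y : CoprodI G, (a ℓ₁)⁻¹ * a ℓ₂ = x ^ n * y ^ n := by
  -- `56 = 47 + 9` bounds all errors; `57` must avoid the `56`-neighbourhood of `n ℤ`
  refine ⟨114, fun n hn => ?_⟩
  set K : ℕ → ℕ := fun j => 1000 ^ (j + 1) with hK
  set a : ℕ → CoprodI G := fun j => lprod (rep (W (K j)) 57) with ha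
  have h0 : ∀ k, W k ≠ [] := fun k h => by
    have := hlen k
    simp [h] at this
  have hself : ∀ j, qm (W (K j)) (a j) = 57 := fun j => by
    have h1 : occ (linv (W (K j))) (rep (W (K j)) 57) = 0 := by
      by_contra h
      exact hinv _ _ (infix_of_occ_pos _ _ (Nat.pos_of_ne_zero h))
    rw [qm, ha, nf_lprod (hred _ _), hcount, occ_rep_self _ (hub _) (h0 _), h1]
    simp
  have hlt : ∀ i j, i < j → qm (W (K j)) (a i) = 0 := fun i j hij => by
    have h1 : (rep (W (K i)) 57).length < (W (K j)).length := by
      rw [length_rep]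
      have h2 := hlen' (K i)
      have h3 := hlen (K j)
      have h4 : 1000 * K i ≤ K j := by
        simp only [hK]
        rw [← pow_succ']
        exact Nat.pow_le_pow_right (by norm_num) (by omega)
      have h5 : 1 ≤ K i := Nat.one_le_pow _ _ (by norm_num)
      omega
    rw [qm, ha, nf_lprod (hred _ _), hcount, occ_eq_zero_of_length_lt _ _ h1,
      occ_eq_zero_of_length_lt _ _ (by simpa [linv] using h1)]
    simp
  -- neither `57` nor `-57` is within `56` of a multiple of `n`
  have hnum : ∀ z : ℤ, 57 ≤ |57 - n * z| ∧ 57 ≤ |-57 - n * z| := by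
    intro z
    have hn' : (114 : ℤ) ≤ n := by exact_mod_cast hn
    rw [le_abs, le_abs]
    rcases lt_trichotomy z 0 with hz | rfl | hz
    · have : (n : ℤ) * z ≤ -114 := by nlinarith
      omega
    · simp
    · have : (114 : ℤ) ≤ n * z := by nlinarith
      omega
  refine ⟨a, fun ℓ₁ ℓ₂ hne => ?_⟩
  rintro ⟨x, y, hxy⟩
  rcases lt_or_gt_of_ne hne with h | h
  · have b1 := hself ℓ₂
    have b2 := hlt _ _ h
    have b3 := qm_mul (hub (K ℓ₂)) (h0 _) (a ℓ₁)⁻¹ (a ℓ₂)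
    have b4 := qm_inv (h0 (K ℓ₂)) (a ℓ₁)
    obtain ⟨z, b5⟩ := qm_pow_mul_pow (hub (K ℓ₂)) (h0 _) x y n
    rw [← hxy] at b5
    have b6 := (hnum z).1
    rw [le_abs] at b6
    rw [abs_le] at b3 b5
    omega
  · have b1 := hself ℓ₁
    have b2 := hlt _ _ h
    have b3 := qm_mul (hub (K ℓ₁)) (h0 _) (a ℓ₁)⁻¹ (a ℓ₂)
    have b4 := qm_inv (h0 (K ℓ₁)) (a ℓ₁)
    obtain ⟨z, b5⟩ := qm_pow_mul_pow (hub (K ℓ₁)) (h0 _) x y n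
    rw [← hxy] at b5
    have b6 := (hnum z).2
    rw [le_abs] at b6
    rw [abs_le] at b3 b5
    omega

theorem mem_rep {α : Type*} {L : List α} {x : α} {n : ℕ} (h : x ∈ rep L n) : x ∈ L := by
  induction n with
  | zero => simp [rep] at h
  | succ n ih =>
    rcases List.mem_append.1 h with h | h
    · exact h
    · exact ih h

theorem red_rep_pair_append {a b c : Σ i, G i} {L : List (Σ i, G i)} (ha : a.2 ≠ 1)
    (hb : b.2 ≠ 1) (hab : a.1 ≠ b.1) (hbc : b.1 ≠ c.1) (hL : Red (c :: L)) (k : ℕ) :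
    Red (rep [a, b] (k + 1) ++ c :: L) := by
  have h1 : Red (rep [a, b] (k + 1)) :=
    red_rep (L := []) (by simp [Red, ha, hb, hab]) hab (k + 1)
  have h2 : rep [a, b] (k + 1) = (rep [a, b] k ++ [a]) ++ [b] := by
    rw [rep_add]; simp [rep]
  rw [h2] at h1 ⊢
  exact red_glue h1 hL hbc

/-- A factor containing an element `t` with `t² ≠ 1`, together with a letter `s` of another
factor: the patterns are `(s t)ᵏ⁺² s t⁻¹`. The word `t⁻¹ x t⁻¹` occurs in the inverse pattern but
not in the powers of the pattern. -/
theorem sequence_of_not_involution {i j : ι} (hij : i ≠ j) (t : G i) (ht : t * t ≠ 1) (s : G j)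
    (hs : s ≠ 1) :
    ∃ N : ℕ, ∀ n : ℕ, N ≤ n → ∃ a : ℕ → CoprodI G, ∀ ℓ₁ ℓ₂ : ℕ, ℓ₁ ≠ ℓ₂ →
      ¬ ∃ x y : CoprodI G, (a ℓ₁)⁻¹ * a ℓ₂ = x ^ n * y ^ n := by
  set S : Σ i, G i := ⟨j, s⟩ with hS
  set T : Σ i, G i := ⟨i, t⟩ with hT
  set U : Σ i, G i := ⟨i, t⁻¹⟩ with hU
  have ht1 : t ≠ 1 := by rintro rfl; simp at ht
  have hUT : U ≠ T := by
    intro h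
    have h1 : t⁻¹ = t := by simpa [hU, hT] using h
    apply ht
    nth_rewrite 1 [← h1]
    simp
  have hUS : U ≠ S := fun h => hij (congrArg Sigma.fst h)
  refine exists_sequence_of_patterns (fun k => rep [S, T] (k + 2) ++ [S, U]) ?_ ?_ ?_ ?_ ?_
  · intro k; simp [length_rep]; omega
  · intro k; simp [length_rep]; omega
  · intro k M
    have h1 : Red (rep [S, T] (k + 1 + 1) ++ [S, U]) :=
      red_rep_pair_append hs ht1 hij.symm hij (by simp [Red, S, U, hs, ht1, hij.symm]) _
    have h2 := red_rep (a := S) (b := U) (L := T :: rep [S, T] (k + 1) ++ [S])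
      (by simpa [rep] using h1) hij.symm M
    simpa [rep] using h2
  · intro k
    have := unbordered_concat (rep [S, T] (k + 2) ++ [S]) U (by
      intro h
      rcases List.mem_append.1 h with h | h
      · have := mem_rep h
        simp [hUS, hUT] at this
      · simp [hUS] at h)
    simpa using this
  · intro k M
    have hsub : [U, letterInv S, U] <:+: linv (rep [S, T] (k + 2) ++ [S, U]) := by
      refine ⟨[T, letterInv S], letterInv S :: linv (rep [S, T] k), ?_⟩
      rw [rep_add]
      simp [linv, rep, letterInv, T, U]
    have key : ∀ M, (∀ x, ¬ [U, x, U] <:+: rep (rep [S, T] (k + 2) ++ [S, U]) M) ∧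
        (rep (rep [S, T] (k + 2) ++ [S, U]) M = [] ∨
          ∃ R, rep (rep [S, T] (k + 2) ++ [S, U]) M = S :: T :: R) := by
      intro M
      induction M with
      | zero => simp [rep]
      | succ M ih =>
        refine ⟨fun x => ?_, .inr ⟨_, rfl⟩⟩
        obtain ⟨ih1, ih2⟩ := ih
        have hpre : ∀ (m : ℕ) (R : List (Σ i, G i)), ¬ [U, x, U] <:+: R →
            ¬ [U, x, U] <:+: rep [S, T] m ++ R := by
          intro m R hR
          induction m with
          | zero => simpa [rep] using hR
          | succ m ihm =>
            rw [rep]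
            simp only [List.cons_append, List.nil_append, List.infix_cons_iff,
              List.cons_prefix_cons, hUS, hUT, false_and, false_or]
            exact ihm
        rw [rep, List.append_assoc]
        apply hpre
        simp only [List.cons_append, List.nil_append, List.infix_cons_iff,
          List.cons_prefix_cons, hUS, false_and, false_or, true_and, not_or]
        refine ⟨?_, ih1 x⟩
        rcases ih2 with h | ⟨R, h⟩ <;> rw [h]
        · simp
        · simp [List.cons_prefix_cons, hUT]
    exact fun h => (key M).1 _ (hsub.trans h)

/-- Three different factors: the patterns are `(a b)ᵏ⁺² c`. In the inverse pattern a letter of the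
factor of `c` is followed by one of the factor of `b`, which never happens in the powers of the
pattern. -/
theorem sequence_of_three_factors {i j k : ι} (hij : i ≠ j) (hik : i ≠ k) (hjk : j ≠ k)
    (a : G i) (ha : a ≠ 1) (b : G j) (hb : b ≠ 1) (c : G k) (hc : c ≠ 1) :
    ∃ N : ℕ, ∀ n : ℕ, N ≤ n → ∃ a : ℕ → CoprodI G, ∀ ℓ₁ ℓ₂ : ℕ, ℓ₁ ≠ ℓ₂ →
      ¬ ∃ x y : CoprodI G, (a ℓ₁)⁻¹ * a ℓ₂ = x ^ n * y ^ n := by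
  set A : Σ i, G i := ⟨i, a⟩ with hA
  set B : Σ i, G i := ⟨j, b⟩ with hB
  set C : Σ i, G i := ⟨k, c⟩ with hC
  have hCA : C ≠ A := fun h => hik (congrArg Sigma.fst h).symm
  have hCB : C ≠ B := fun h => hjk (congrArg Sigma.fst h).symm
  have hCA' : letterInv C ≠ A := fun h => hik (congrArg Sigma.fst h).symm
  have hCB' : letterInv C ≠ B := fun h => hjk (congrArg Sigma.fst h).symm
  have hBA' : letterInv B ≠ A := fun h => hij (congrArg Sigma.fst h).symm
  refine exists_sequence_of_patterns (fun m => rep [A, B] (m + 2) ++ [C]) ?_ ?_ ?_ ?_ ?_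
  · intro m; simp [length_rep]; omega
  · intro m; simp [length_rep]; omega
  · intro m M
    have h1 : Red (rep [A, B] (m + 1 + 1) ++ [C]) :=
      red_rep_pair_append ha hb hij hjk (by simp [Red, C, hc]) _
    exact red_rep (a := A) (b := C) (L := B :: rep [A, B] (m + 1))
      (by simpa [rep] using h1) hik M
  · intro m
    refine unbordered_concat _ C (fun h => ?_)
    have := mem_rep h
    simp [hCA, hCB] at this
  · intro m M
    have hsub : [letterInv C, letterInv B] <:+: linv (rep [A, B] (m + 2) ++ [C]) := by
      refine ⟨[], letterInv A :: linv (rep [A, B] (m + 1)), ?_⟩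
      rw [show m + 2 = (m + 1) + 1 from rfl, rep_add _ (m + 1)]
      simp [linv, rep]
    have key : ∀ M, (¬ [letterInv C, letterInv B] <:+: rep (rep [A, B] (m + 2) ++ [C]) M) ∧
        (rep (rep [A, B] (m + 2) ++ [C]) M = [] ∨
          ∃ R, rep (rep [A, B] (m + 2) ++ [C]) M = A :: R) := by
      intro M
      induction M with
      | zero => simp [rep]
      | succ M ih =>
        refine ⟨?_, .inr ⟨_, rfl⟩⟩
        obtain ⟨ih1, ih2⟩ := ih
        have hpre : ∀ (m : ℕ) (R : List (Σ i, G i)), ¬ [letterInv C, letterInv B] <:+: R →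
            ¬ [letterInv C, letterInv B] <:+: rep [A, B] m ++ R := by
          intro m R hR
          induction m with
          | zero => simpa [rep] using hR
          | succ m ihm =>
            rw [rep]
            simp only [List.cons_append, List.nil_append, List.infix_cons_iff,
              List.cons_prefix_cons, hCA', hCB', false_and, false_or]
            exact ihm
        rw [rep, List.append_assoc]
        apply hpre
        simp only [List.cons_append, List.nil_append, List.infix_cons_iff,
          List.cons_prefix_cons, not_or]
        refine ⟨?_, ih1⟩
        rcases ih2 with h | ⟨R, h⟩ <;> rw [h]
        · simp
        · simp [List.cons_prefix_cons, hBA']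
    exact fun h => (key M).1 (hsub.trans h)

end Patterns

/-! ### The virtually abelian free products -/

section Exceptional

variable {ι : Type*} {G : ι → Type*} [∀ i, Group (G i)]

theorem coprodI_comm_of_subsingleton (hι : ∀ i j : ι, i = j)
    (hG : ∀ i, ∀ a b : G i, a * b = b * a) (x y : CoprodI G) : Commute x y := by
  induction x using CoprodI.induction_on with
  | one => exact Commute.one_left y
  | mul x x' hx hx' => exact hx.mul_left hx'
  | of i a =>
    induction y using CoprodI.induction_on with
    | one => exact Commute.one_right _
    | mul y y' hy hy' => exact hy.mul_right hy'
    | of j b =>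
      obtain rfl := hι i j
      rw [Commute, SemiconjBy, ← map_mul, ← map_mul, hG]

/-- In the infinite dihedral group, the rotations form an abelian subgroup of finite index. -/
theorem coprodI_dihedral {i j : ι} (hι : ∀ k, k = i ∨ k = j) {g : G i} {h : G j}
    (hg : ∀ x : G i, x = 1 ∨ x = g) (hh : ∀ x : G j, x = 1 ∨ x = h)
    (hg2 : g * g = 1) (hh2 : h * h = 1) :
    ∃ H : Subgroup (CoprodI G), H.FiniteIndex ∧ ∀ a b : H, a * b = b * a := by
  set A : CoprodI G := CoprodI.of g with hA
  set B : CoprodI G := CoprodI.of h with hB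
  have hAA : A * A = 1 := by rw [hA, ← map_mul, hg2, map_one]
  have hBB : B * B = 1 := by rw [hB, ← map_mul, hh2, map_one]
  have hA' : A⁻¹ = A := inv_eq_of_mul_eq_one_left hAA
  have hB' : B⁻¹ = B := inv_eq_of_mul_eq_one_left hBB
  set Z := Subgroup.zpowers (A * B) with hZ
  have hconj : ∀ z ∈ Z, A * z * A ∈ Z := by
    rintro z ⟨k, rfl⟩
    refine ⟨-k, ?_⟩
    have h1 : A * (A * B) ^ k * A = A * (A * B) ^ k * A⁻¹ := by rw [hA']
    have h2 : A * (A * B) * A⁻¹ = (A * B)⁻¹ := by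
      rw [mul_inv_rev, hA', hB', ← mul_assoc, hAA, one_mul]
    simp only
    rw [h1, ← conj_zpow, h2, inv_zpow, zpow_neg]
  have hcover : ∀ x : CoprodI G, x ∈ Z ∨ A * x ∈ Z := by
    intro x
    induction x using CoprodI.induction_on with
    | one => exact .inl Z.one_mem
    | of k x =>
      rcases hι k with rfl | rfl
      · rcases hg x with rfl | rfl
        · left; rw [map_one]; exact Z.one_mem
        · right; rw [← hA, hAA]; exact Z.one_mem
      · rcases hh x with rfl | rfl
        · left; rw [map_one]; exact Z.one_mem
        · right; exact Subgroup.mem_zpowers _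
    | mul x y hx hy =>
      rcases hx with hx | hx <;> rcases hy with hy | hy
      · exact .inl (Z.mul_mem hx hy)
      · right
        have : A * (x * y) = (A * x * A) * (A * y) := by
          rw [mul_assoc (A * x), ← mul_assoc A A, hAA, one_mul, mul_assoc]
        rw [this]
        exact Z.mul_mem (hconj x hx) hy
      · right
        rw [← mul_assoc]
        exact Z.mul_mem hx hy
      · left
        have : x * y = (A * (A * x) * A) * (A * y) := by
          rw [mul_assoc (A * (A * x)), ← mul_assoc A A, ← mul_assoc A A, hAA, one_mul, one_mul]
        rw [this]
        exact Z.mul_mem (hconj _ hx) hy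
  refine ⟨Z, ?_, ?_⟩
  · have hfin : Finite (CoprodI G ⧸ Z) := by
      refine Finite.of_surjective
        (fun b : Bool => if b then ((1 : CoprodI G) : CoprodI G ⧸ Z) else (A : CoprodI G ⧸ Z)) ?_
      intro q
      induction q using QuotientGroup.induction_on with
      | H x =>
        rcases hcover x with hx | hx
        · exact ⟨true, by simpa [QuotientGroup.eq] using hx⟩
        · exact ⟨false, by simpa [QuotientGroup.eq, hA'] using hx⟩
    exact Subgroup.finiteIndex_of_finite_quotient
  · exact fun a b => mul_comm' a b

end Exceptional

end CyclicFreeProduct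

namespace CyclicFreeProduct

/-! ### Cyclic factors -/

section Cyclic

variable {G : Type*} [Group G]

theorem exists_ne_one_of_cyclic (h : Nonempty (G ≃* Multiplicative ℤ) ∨
    ∃ k : ℕ, 2 ≤ k ∧ Nonempty (G ≃* Multiplicative (ZMod k))) : ∃ g : G, g ≠ 1 := by
  rcases h with ⟨⟨e⟩⟩ | ⟨k, hk, ⟨e⟩⟩
  · exact ⟨e.symm (Multiplicative.ofAdd 1), by simp⟩
  · have : Fact (1 < k) := ⟨hk⟩
    exact ⟨e.symm (Multiplicative.ofAdd 1), by simp⟩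

theorem comm_of_cyclic (h : Nonempty (G ≃* Multiplicative ℤ) ∨
    ∃ k : ℕ, 2 ≤ k ∧ Nonempty (G ≃* Multiplicative (ZMod k))) (a b : G) : a * b = b * a := by
  rcases h with ⟨⟨e⟩⟩ | ⟨k, hk, ⟨e⟩⟩ <;>
  · apply e.injective
    rw [map_mul, map_mul, mul_comm]

/-- A nontrivial cyclic group of exponent two has order two. -/
theorem order_two_of_cyclic (h : Nonempty (G ≃* Multiplicative ℤ) ∨
    ∃ k : ℕ, 2 ≤ k ∧ Nonempty (G ≃* Multiplicative (ZMod k))) (h2 : ∀ t : G, t * t = 1) :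
    ∃ g : G, ∀ x : G, x = 1 ∨ x = g := by
  rcases h with ⟨⟨e⟩⟩ | ⟨k, hk, ⟨e⟩⟩
  · have h3 := congrArg e (h2 (e.symm (Multiplicative.ofAdd 1)))
    rw [map_mul, e.apply_symm_apply, map_one e] at h3
    have h4 : (1 : ℤ) + 1 = 0 := congrArg Multiplicative.toAdd h3
    norm_num at h4
  · have h3 := congrArg e (h2 (e.symm (Multiplicative.ofAdd 1)))
    rw [map_mul, e.apply_symm_apply, map_one e] at h3
    have h4 : (1 : ZMod k) + 1 = 0 := congrArg Multiplicative.toAdd h3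
    have h5 : ((2 : ℕ) : ZMod k) = 0 := by
      rw [← h4]; norm_num
    have h6 := Nat.le_of_dvd (by norm_num) ((ZMod.natCast_eq_zero_iff 2 k).1 h5)
    obtain rfl : k = 2 := by omega
    refine ⟨e.symm (Multiplicative.ofAdd 1), fun x => ?_⟩
    have h7 : ∀ y : ZMod 2, y = 0 ∨ y = 1 := by decide
    rcases h7 (Multiplicative.toAdd (e x)) with h | h
    · left
      apply e.injective
      rw [map_one]
      exact h
    · right
      rw [e.eq_symm_apply]
      exact h

end Cyclic

end CyclicFreeProduct

/-- Let `B` be the free product of a family of nontrivial cyclic groups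
(each isomorphic to `ℤ` or to `ℤ/kℤ` for some `k ≥ 2`), and suppose `B` has no abelian
subgroup of finite index. Then there is `N` such that for every `n ≥ N` there is a sequence
`(a_ℓ)` in `B` with `a_{ℓ₁}⁻¹ a_{ℓ₂} ∉ {xⁿyⁿ : x, y ∈ B}` whenever `ℓ₁ ≠ ℓ₂`. -/
theorem coprodI_cyclic_not_virtuallyAbelian_powers
    {ι : Type} (Gi : ι → Type) [∀ i, Group (Gi i)]
    (hcyc : ∀ i, Nonempty (Gi i ≃* Multiplicative ℤ) ∨
      ∃ k : ℕ, 2 ≤ k ∧ Nonempty (Gi i ≃* Multiplicative (ZMod k)))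
    (hnva : ¬ ∃ H : Subgroup (Monoid.CoprodI Gi), H.FiniteIndex ∧ ∀ a b : H, a * b = b * a) :
    ∃ N : ℕ, ∀ n : ℕ, N ≤ n →
      ∃ a : ℕ → Monoid.CoprodI Gi, ∀ ℓ₁ ℓ₂ : ℕ, ℓ₁ ≠ ℓ₂ →
        ¬ ∃ x y : Monoid.CoprodI Gi, (a ℓ₁)⁻¹ * a ℓ₂ = x ^ n * y ^ n := by
  by_cases hA : ∃ (i j : ι) (_ : i ≠ j) (t : Gi i), t * t ≠ 1
  · obtain ⟨i, j, hij, t, ht⟩ := hA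
    obtain ⟨s, hs⟩ := CyclicFreeProduct.exists_ne_one_of_cyclic (hcyc j)
    exact CyclicFreeProduct.sequence_of_not_involution hij t ht s hs
  by_cases hB : ∃ i j k : ι, i ≠ j ∧ i ≠ k ∧ j ≠ k
  · obtain ⟨i, j, k, hij, hik, hjk⟩ := hB
    obtain ⟨a, ha⟩ := CyclicFreeProduct.exists_ne_one_of_cyclic (hcyc i)
    obtain ⟨b, hb⟩ := CyclicFreeProduct.exists_ne_one_of_cyclic (hcyc j)
    obtain ⟨c, hc⟩ := CyclicFreeProduct.exists_ne_one_of_cyclic (hcyc k)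
    exact CyclicFreeProduct.sequence_of_three_factors hij hik hjk a ha b hb c hc
  -- what remains is at most one factor, or two factors of order two
  exfalso
  apply hnva
  push Not at hA hB
  by_cases hι : ∀ i j : ι, i = j
  · exact ⟨⊤, inferInstance, fun a b => Subtype.ext
      (CyclicFreeProduct.coprodI_comm_of_subsingleton hι
        (fun i => CyclicFreeProduct.comm_of_cyclic (hcyc i)) a b)⟩
  · push Not at hι
    obtain ⟨i, j, hij⟩ := hι
    obtain ⟨g, hg⟩ := CyclicFreeProduct.order_two_of_cyclic (hcyc i) (hA i j hij)
    obtain ⟨h, hh⟩ := CyclicFreeProduct.order_two_of_cyclic (hcyc j) (hA j i hij.symm)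
    refine CyclicFreeProduct.coprodI_dihedral (i := i) (j := j) (fun k => ?_) hg hh
      (hA i j hij g) (hA j i hij.symm h)
    by_contra hk
    push Not at hk
    exact hk.2 (hB i j k hij hk.1.symm).symm
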